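/- arXiv:2402.15912 — 2 statements merged into one kernel-verified Lean document; each statement's English description precedes it below -/
import Mathlib

section
/- (Theorem 1) Fix the exponential utility u(w) = (1 − e^{−rw})/r with r ≠ 0 and q = 1/2, and let ρ_SA be a bipartite density matrix on ℂ^{d_S} ⊗ ℂ^{d_A} with reduced state ρ_S = Tr_A(ρ_SA). Then the maximum daemonic gain vanishes, δ𝓤(ρ_SA) = 0, if and only if there exist an orthonormal eigenbasis {|u_k⟩} of e^{−rH_S/2} ρ_S e^{−rH_S/2} with eigenvalues in decreasing order and positive semidefinite matrices C^A_k on ℂ^{d_A} with C^A_k − C^A_{k+1} positive semidefinite for all k = 1, ..., d_S − 1, such that ρ_SA = Σ_k (e^{rH_S/2} |u_k⟩⟨u_k| e^{rH_S/2}) ⊗ C^A_k; in particular every such ρ_SA is separable. -/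
open Matrix BigOperators Finset Kronecker
open scoped ComplexOrder

noncomputable section

namespace Daemonic

/-- The outer product `|x⟩⟨y|` as a matrix. -/
def ketbra {ι : Type*} [Fintype ι] (x y : ι → ℂ) : Matrix ι ι ℂ :=
  Matrix.vecMulVec x (star y)

/-- A family of vectors is orthonormal. -/
def ONFam {ι κ : Type*} [Fintype ι] [DecidableEq κ] (v : κ → ι → ℂ) : Prop :=
  ∀ i j, star (v i) ⬝ᵥ v j = if i = j then 1 else 0

/-- A density matrix: positive semidefinite with unit trace. -/
def IsDensity {ι : Type*} [Fintype ι] (ρ : Matrix ι ι ℂ) : Prop :=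
  ρ.PosSemidef ∧ ρ.trace = 1

/-- The matrix element `⟨x|M|y⟩`. -/
def matElem {ι : Type*} [Fintype ι] (M : Matrix ι ι ℂ) (x y : ι → ℂ) : ℂ :=
  star x ⬝ᵥ (M *ᵥ y)

/-- The Hamiltonian `H_S = ∑ₖ εₖ |εₖ⟩⟨εₖ|`. -/
def ham {n : ℕ} (ε : Fin n → ℝ) (v : Fin n → Fin n → ℂ) : Matrix (Fin n) (Fin n) ℂ :=
  ∑ k, (ε k : ℂ) • ketbra (v k) (v k)

/-- `e^{t H_S} = ∑ₖ e^{t εₖ} |εₖ⟩⟨εₖ|` (functional calculus in the eigenbasis of `H_S`). -/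
def expHam {n : ℕ} (ε : Fin n → ℝ) (v : Fin n → Fin n → ℂ) (t : ℝ) :
    Matrix (Fin n) (Fin n) ℂ :=
  ∑ k, (Real.exp (t * ε k) : ℂ) • ketbra (v k) (v k)

/-- The expected utility `⟨u(w)⟩_{ρ,U}` for quasiprobability parameter `q`,
with respect to the eigenvalues `ε` and orthonormal eigenvectors `v` of `H_S`. -/
def expUtil {n : ℕ} (u : ℝ → ℝ) (q : ℝ) (ε : Fin n → ℝ) (v : Fin n → Fin n → ℂ)
    (ρ U : Matrix (Fin n) (Fin n) ℂ) : ℝ :=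
  ∑ i, ∑ j, ∑ k,
    (matElem ρ (v i) (v j) * matElem Uᴴ (v j) (v k) * matElem U (v k) (v i)).re *
      u (q * ε i + (1 - q) * ε j - ε k)

/-- The optimal expected utility `𝓤(ρ) = max over unitaries U of ⟨u(w)⟩_{ρ,U}`. -/
def optUtil {n : ℕ} (u : ℝ → ℝ) (q : ℝ) (ε : Fin n → ℝ) (v : Fin n → Fin n → ℂ)
    (ρ : Matrix (Fin n) (Fin n) ℂ) : ℝ :=
  ⨆ U : Matrix.unitaryGroup (Fin n) ℂ, expUtil u q ε v ρ (U : Matrix (Fin n) (Fin n) ℂ)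

/-- The exponential utility `u(w) = (1 - e^{-r w})/r`. -/
def expUtility (r : ℝ) : ℝ → ℝ := fun w => (1 - Real.exp (-r * w)) / r

/-- The partial trace over the ancilla. -/
def ptraceA {dS dA : ℕ} (ρSA : Matrix (Fin dS × Fin dA) (Fin dS × Fin dA) ℂ) :
    Matrix (Fin dS) (Fin dS) ℂ :=
  Matrix.of fun i j => ∑ a, ρSA (i, a) (j, a)

/-- The unnormalized conditional state `Tr_A((I ⊗ Π_a) ρ_SA (I ⊗ Π_a))`, where
`Π_a = |a⟩⟨a|` projects onto the vector `w a` of an orthonormal basis `w` of the ancilla. -/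
def condUnnorm {dS dA : ℕ} (w : Fin dA → Fin dA → ℂ)
    (ρSA : Matrix (Fin dS × Fin dA) (Fin dS × Fin dA) ℂ) (a : Fin dA) :
    Matrix (Fin dS) (Fin dS) ℂ :=
  Matrix.of fun i j => ∑ c, ∑ d, ρSA (i, c) (j, d) * (w a d * star (w a c))

/-- The outcome probability `p_a = Tr((I ⊗ Π_a) ρ_SA)`. -/
def prob {dS dA : ℕ} (w : Fin dA → Fin dA → ℂ)
    (ρSA : Matrix (Fin dS × Fin dA) (Fin dS × Fin dA) ℂ) (a : Fin dA) : ℝ :=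
  ((condUnnorm w ρSA a).trace).re

/-- The conditional state `ρ_{S|a}`. -/
def condState {dS dA : ℕ} (w : Fin dA → Fin dA → ℂ)
    (ρSA : Matrix (Fin dS × Fin dA) (Fin dS × Fin dA) ℂ) (a : Fin dA) :
    Matrix (Fin dS) (Fin dS) ℂ :=
  ((prob w ρSA a : ℂ))⁻¹ • condUnnorm w ρSA a

/-- The daemonic expected utility `𝓤_{{Π_a}}(ρ_SA) = ∑_a p_a 𝓤(ρ_{S|a})`. -/
def daemonicUtil {dS dA : ℕ} (u : ℝ → ℝ) (q : ℝ) (ε : Fin dS → ℝ)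
    (v : Fin dS → Fin dS → ℂ) (w : Fin dA → Fin dA → ℂ)
    (ρSA : Matrix (Fin dS × Fin dA) (Fin dS × Fin dA) ℂ) : ℝ :=
  ∑ a, prob w ρSA a * optUtil u q ε v (condState w ρSA a)

/-- The maximum daemonic gain `δ𝓤(ρ_SA)`, maximizing over all orthonormal bases of the
ancilla (equivalently, over the rows of all unitary matrices). -/
def daemonicGain {dS dA : ℕ} (u : ℝ → ℝ) (q : ℝ) (ε : Fin dS → ℝ)
    (v : Fin dS → Fin dS → ℂ)
    (ρSA : Matrix (Fin dS × Fin dA) (Fin dS × Fin dA) ℂ) : ℝ :=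
  (⨆ V : Matrix.unitaryGroup (Fin dA) ℂ,
      daemonicUtil u q ε v (fun a => (V : Matrix (Fin dA) (Fin dA) ℂ) a) ρSA) -
    optUtil u q ε v (ptraceA ρSA)

/-- The ergotropy of a (possibly unnormalized) state `σ` with respect to a Hamiltonian `H`:
`ℰ_H(σ) = max over unitaries U of (Tr(Hσ) - Tr(H U σ U†))`. -/
def ergotropyH {n : ℕ} (H σ : Matrix (Fin n) (Fin n) ℂ) : ℝ :=
  ⨆ U : Matrix.unitaryGroup (Fin n) ℂ,
    ((H * σ).trace -
      (H * ((U : Matrix (Fin n) (Fin n) ℂ) * σ * (U : Matrix (Fin n) (Fin n) ℂ)ᴴ)).trace).re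

/-- A separable bipartite state: a convex combination of product states. -/
def IsSeparable {dS dA : ℕ} (ρSA : Matrix (Fin dS × Fin dA) (Fin dS × Fin dA) ℂ) : Prop :=
  ∃ (m : ℕ) (p : Fin m → ℝ) (σ : Fin m → Matrix (Fin dS) (Fin dS) ℂ)
    (τ : Fin m → Matrix (Fin dA) (Fin dA) ℂ),
    (∀ k, 0 ≤ p k) ∧ (∑ k, p k = 1) ∧ (∀ k, IsDensity (σ k)) ∧ (∀ k, IsDensity (τ k)) ∧
    ρSA = ∑ k, (p k : ℂ) • (σ k ⊗ₖ τ k)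

/-- A classical-quantum state `ρ_SA = ∑ₖ pₖ Pₖ ⊗ ρᴬₖ` with `Pₖ` mutually orthogonal
rank-one projectors summing to the identity. -/
def IsClassicalQuantum {dS dA : ℕ}
    (ρSA : Matrix (Fin dS × Fin dA) (Fin dS × Fin dA) ℂ) : Prop :=
  ∃ (p : Fin dS → ℝ) (ψ : Fin dS → Fin dS → ℂ) (τ : Fin dS → Matrix (Fin dA) (Fin dA) ℂ),
    (∀ k, 0 ≤ p k) ∧ (∑ k, p k = 1) ∧ ONFam ψ ∧ (∀ k, IsDensity (τ k)) ∧
    ρSA = ∑ k, (p k : ℂ) • (ketbra (ψ k) (ψ k) ⊗ₖ τ k)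

/-- The dephasing map associated with an orthonormal basis `v`. -/
def dephase {n : ℕ} (v : Fin n → Fin n → ℂ) (ρ : Matrix (Fin n) (Fin n) ℂ) :
    Matrix (Fin n) (Fin n) ℂ :=
  ∑ k, ketbra (v k) (v k) * ρ * ketbra (v k) (v k)


/-- Matrix whose columns are the vectors of the family. -/
def colM {n : ℕ} (φ : Fin n → Fin n → ℂ) : Matrix (Fin n) (Fin n) ℂ := Matrix.of fun i k => φ k i

lemma onfam_iff {n : ℕ} (φ : Fin n → Fin n → ℂ) : ONFam φ ↔ (colM φ)ᴴ * colM φ = 1 := by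
  rw [← Matrix.ext_iff]
  refine forall_congr' fun i => forall_congr' fun j => ?_
  rw [Matrix.one_apply, Matrix.mul_apply]
  rfl

lemma sum_ketbra {n : ℕ} (φ : Fin n → Fin n → ℂ) (c : Fin n → ℂ) :
    ∑ k, c k • ketbra (φ k) (φ k) = colM φ * diagonal c * (colM φ)ᴴ := by
  ext i j
  rw [Matrix.sum_apply, Matrix.mul_apply]
  refine Finset.sum_congr rfl fun k _ => ?_
  rw [mul_diagonal]
  simp only [Matrix.smul_apply, ketbra, vecMulVec_apply,
    colM, conjTranspose_apply, of_apply, smul_eq_mul, Pi.star_apply]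
  ring

lemma ketbra_eq {n : ℕ} (φ : Fin n → Fin n → ℂ) (k : Fin n) :
    ketbra (φ k) (φ k) = colM φ * diagonal (Pi.single k 1) * (colM φ)ᴴ := by
  rw [← sum_ketbra, Finset.sum_eq_single k] <;> simp +contextual

lemma expHam_eq {n : ℕ} (ε : Fin n → ℝ) (v : Fin n → Fin n → ℂ) (t : ℝ) :
    expHam ε v t = colM v * diagonal (fun k => (Real.exp (t * ε k) : ℂ)) * (colM v)ᴴ :=
  sum_ketbra v _

lemma expHam_herm {n : ℕ} (ε : Fin n → ℝ) (v : Fin n → Fin n → ℂ) (t : ℝ) :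
    (expHam ε v t)ᴴ = expHam ε v t := by
  rw [expHam_eq]
  simp only [conjTranspose_mul, conjTranspose_conjTranspose, diagonal_conjTranspose, Matrix.mul_assoc]
  congr 3
  ext k
  simp only [Pi.star_apply, RCLike.star_def, Complex.conj_ofReal]

lemma expHam_mul {n : ℕ} (ε : Fin n → ℝ) (v : Fin n → Fin n → ℂ) (hv : ONFam v) (t s : ℝ)
    (h : t + s = 0) : expHam ε v t * expHam ε v s = 1 := by
  rw [onfam_iff] at hv
  rw [expHam_eq, expHam_eq]
  calc _ = colM v * diagonal (fun k => (Real.exp (t * ε k) : ℂ)) * ((colM v)ᴴ * colM v) *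
      diagonal (fun k => (Real.exp (s * ε k) : ℂ)) * (colM v)ᴴ := by simp only [Matrix.mul_assoc]
    _ = colM v * (diagonal (fun k => (Real.exp (t * ε k) : ℂ)) *
      diagonal (fun k => (Real.exp (s * ε k) : ℂ))) * (colM v)ᴴ := by
        rw [hv]; simp only [Matrix.mul_assoc, Matrix.mul_one]
    _ = 1 := by
        rw [diagonal_mul_diagonal]
        have : (fun k => (Real.exp (t * ε k) : ℂ) * (Real.exp (s * ε k) : ℂ)) = fun _ => 1 := by
          ext k
          rw [← Complex.ofReal_mul, ← Real.exp_add, ← add_mul, h]; simp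
        rw [this, diagonal_one, Matrix.mul_one]
        exact mul_eq_one_comm.mp hv

lemma matElem_eq {n : ℕ} (v : Fin n → Fin n → ℂ) (M : Matrix (Fin n) (Fin n) ℂ) (i j : Fin n) :
    matElem M (v i) (v j) = ((colM v)ᴴ * M * colM v) i j := by
  rw [Matrix.mul_assoc]
  rfl

/-- The objective function to be minimised. -/
def Jf {n : ℕ} (g : Fin n → ℝ) (σ Ψ : Matrix (Fin n) (Fin n) ℂ) : ℝ :=
  ∑ k, g k * ((Ψᴴ * σ * Ψ) k k).re

/-- weights -/
def gw {n : ℕ} (r : ℝ) (ε : Fin n → ℝ) : Fin n → ℝ := fun k => Real.exp (r * ε k) / r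

lemma gw_strictMono {n : ℕ} (r : ℝ) (hr : r ≠ 0) (ε : Fin n → ℝ) (hε : StrictMono ε) :
    StrictMono (gw r ε) := by
  intro i j hij
  have h := hε hij
  unfold gw
  rcases lt_or_gt_of_ne hr with h0 | h0
  · apply div_lt_div_of_neg_of_lt h0
    apply Real.exp_lt_exp.2
    nlinarith
  · apply div_lt_div_of_pos_right _ h0
    apply Real.exp_lt_exp.2
    nlinarith

lemma util_aux {n : ℕ} (r : ℝ) (ε : Fin n → ℝ) (R X : Matrix (Fin n) (Fin n) ℂ)
    (hX : Xᴴ * X = 1) :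
    ∑ i, ∑ j, ∑ k, (R i j * Xᴴ j k * X k i).re *
        expUtility r (1/2 * ε i + (1 - 1/2) * ε j - ε k) =
      R.trace.re / r - ∑ k, gw r ε k *
        ((X * diagonal (fun k => (Real.exp (-r/2 * ε k) : ℂ)) * R *
          diagonal (fun k => (Real.exp (-r/2 * ε k) : ℂ)) * Xᴴ) k k).re := by
  have htr : R.trace = ∑ k, (X * R * Xᴴ) k k := by
    have : (X * R * Xᴴ).trace = R.trace := by
      rw [Matrix.trace_mul_comm, ← Matrix.mul_assoc, hX, Matrix.one_mul]
    rw [← this]; rfl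
  have h1 : R.trace.re / r = ∑ i, ∑ j, ∑ k, (R i j * Xᴴ j k * X k i).re / r := by
    rw [htr, Complex.re_sum, Finset.sum_div]
    have : ∀ k, ((X * R * Xᴴ) k k).re / r = ∑ i, ∑ j, (R i j * Xᴴ j k * X k i).re / r := by
      intro k
      rw [Finset.sum_comm, Matrix.mul_apply, Complex.re_sum, Finset.sum_div]
      refine Finset.sum_congr rfl fun j _ => ?_
      rw [Matrix.mul_apply, Finset.sum_mul, Complex.re_sum, Finset.sum_div]
      refine Finset.sum_congr rfl fun i _ => ?_
      congr 2; ring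
    simp_rw [this]
    rw [Finset.sum_comm]
    refine Finset.sum_congr rfl fun i _ => ?_
    rw [Finset.sum_comm]
  have h2 : ∑ k, gw r ε k *
        ((X * diagonal (fun k => (Real.exp (-r/2 * ε k) : ℂ)) * R *
          diagonal (fun k => (Real.exp (-r/2 * ε k) : ℂ)) * Xᴴ) k k).re =
      ∑ i, ∑ j, ∑ k, (R i j * Xᴴ j k * X k i).re *
        (Real.exp (-r * (1/2 * ε i + (1 - 1/2) * ε j - ε k)) / r) := by
    have : ∀ k, gw r ε k *
        ((X * diagonal (fun k => (Real.exp (-r/2 * ε k) : ℂ)) * R *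
          diagonal (fun k => (Real.exp (-r/2 * ε k) : ℂ)) * Xᴴ) k k).re =
        ∑ i, ∑ j, (R i j * Xᴴ j k * X k i).re *
        (Real.exp (-r * (1/2 * ε i + (1 - 1/2) * ε j - ε k)) / r) := by
      intro k
      rw [Finset.sum_comm, Matrix.mul_apply, Complex.re_sum, Finset.mul_sum]
      refine Finset.sum_congr rfl fun j _ => ?_
      rw [mul_diagonal, Matrix.mul_apply, Finset.sum_mul, Finset.sum_mul, Complex.re_sum,
        Finset.mul_sum]
      refine Finset.sum_congr rfl fun i _ => ?_
      rw [mul_diagonal]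
      have e1 : Real.exp (-r * (1/2 * ε i + (1 - 1/2) * ε j - ε k)) =
        Real.exp (-r/2 * ε i) * Real.exp (-r/2 * ε j) * Real.exp (r * ε k) := by
        rw [← Real.exp_add, ← Real.exp_add]; congr 1; ring
      have e2 : X k i * (Real.exp (-r/2 * ε i) : ℂ) * R i j * (Real.exp (-r/2 * ε j) : ℂ) * Xᴴ j k =
        ((Real.exp (-r/2 * ε i) * Real.exp (-r/2 * ε j) : ℝ) : ℂ) * (R i j * Xᴴ j k * X k i) := by
        push_cast; ring
      rw [e1, e2, Complex.re_ofReal_mul, gw]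
      ring
    simp_rw [this]
    rw [Finset.sum_comm]
    refine Finset.sum_congr rfl fun i _ => ?_
    rw [Finset.sum_comm]
  rw [h1, h2, ← Finset.sum_sub_distrib]
  refine Finset.sum_congr rfl fun i _ => ?_
  rw [← Finset.sum_sub_distrib]
  refine Finset.sum_congr rfl fun j _ => ?_
  rw [← Finset.sum_sub_distrib]
  refine Finset.sum_congr rfl fun k _ => ?_
  rw [expUtility]; ring

/-- effective state -/
def sig {n : ℕ} (r : ℝ) (ε : Fin n → ℝ) (v : Fin n → Fin n → ℂ) (ρ : Matrix (Fin n) (Fin n) ℂ) :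
    Matrix (Fin n) (Fin n) ℂ := expHam ε v (-r/2) * ρ * expHam ε v (-r/2)

lemma expUtil_eq {n : ℕ} (r : ℝ) (ε : Fin n → ℝ) (v : Fin n → Fin n → ℂ)
    (hv : ONFam v) (ρ U : Matrix (Fin n) (Fin n) ℂ) (hU : Uᴴ * U = 1) :
    expUtil (expUtility r) (1/2) ε v ρ U =
      ρ.trace.re / r - Jf (gw r ε) (sig r ε v ρ) (Uᴴ * colM v) := by
  rw [onfam_iff] at hv
  have hv' : colM v * (colM v)ᴴ = 1 := mul_eq_one_comm.mp hv
  set B := colM v with hB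
  have hX : (Bᴴ * U * B)ᴴ * (Bᴴ * U * B) = 1 := by
    calc _ = Bᴴ * Uᴴ * (B * Bᴴ) * U * B := by
          simp only [conjTranspose_mul, conjTranspose_conjTranspose, Matrix.mul_assoc]
      _ = Bᴴ * (Uᴴ * U) * B := by rw [hv']; simp only [Matrix.mul_assoc, Matrix.one_mul]
      _ = 1 := by rw [hU, Matrix.mul_one, hv]
  have key := util_aux r ε (Bᴴ * ρ * B) (Bᴴ * U * B) hX
  have ht : (Bᴴ * ρ * B).trace = ρ.trace := by
    rw [Matrix.trace_mul_comm, ← Matrix.mul_assoc, hv', Matrix.one_mul]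
  have hc : (Bᴴ * U * B)ᴴ = Bᴴ * Uᴴ * B := by
    simp only [conjTranspose_mul, conjTranspose_conjTranspose, Matrix.mul_assoc]
  rw [ht, hc] at key
  unfold expUtil
  simp_rw [matElem_eq]
  rw [← hB]
  rw [key, Jf]
  congr 1
  refine Finset.sum_congr rfl fun k _ => ?_
  congr 3
  rw [sig, expHam_eq, ← hB]
  simp only [conjTranspose_mul, conjTranspose_conjTranspose, Matrix.mul_assoc]

/-- Optimal utility as a supremum over unitaries of the objective. -/
lemma optUtil_eq {n : ℕ} (r : ℝ) (ε : Fin n → ℝ) (v : Fin n → Fin n → ℂ)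
    (hv : ONFam v) (ρ : Matrix (Fin n) (Fin n) ℂ) :
    optUtil (expUtility r) (1/2) ε v ρ = ⨆ Ψ : Matrix.unitaryGroup (Fin n) ℂ,
      (ρ.trace.re / r - Jf (gw r ε) (sig r ε v ρ) (Ψ : Matrix (Fin n) (Fin n) ℂ)) := by
  have hB : colM v ∈ Matrix.unitaryGroup (Fin n) ℂ := by
    rw [mem_unitaryGroup_iff']; exact (onfam_iff v).1 hv
  let e : Matrix.unitaryGroup (Fin n) ℂ ≃ Matrix.unitaryGroup (Fin n) ℂ :=
    (Equiv.inv _).trans (Equiv.mulRight ⟨colM v, hB⟩)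
  rw [optUtil]
  symm
  rw [← e.iSup_comp]
  symm
  refine iSup_congr fun U => ?_
  rw [expUtil_eq r ε v hv ρ U (mem_unitaryGroup_iff'.1 U.2)]
  rfl

lemma Jf_lower {n : ℕ} (g : Fin n → ℝ) (σ Ψ : Matrix (Fin n) (Fin n) ℂ) (hσ : σ.PosSemidef)
    (hΨ : Ψ * Ψᴴ = 1) : -(∑ k, |g k|) * σ.trace.re ≤ Jf g σ Ψ := by
  have hp := hσ.conjTranspose_mul_mul_same Ψ
  have ht : σ.trace = (Ψᴴ * σ * Ψ).trace := by
    rw [Matrix.trace_mul_comm, ← Matrix.mul_assoc, hΨ, Matrix.one_mul]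
  rw [ht, Matrix.trace, Complex.re_sum, Finset.mul_sum, Jf]
  refine Finset.sum_le_sum fun k _ => ?_
  have h1 : 0 ≤ ((Ψᴴ * σ * Ψ) k k).re := (Complex.le_def.1 hp.diag_nonneg).1
  have h2 : |g k| ≤ ∑ k, |g k| := Finset.single_le_sum (f := fun k => |g k|)
    (fun _ _ => abs_nonneg _) (Finset.mem_univ k)
  have h3 := neg_abs_le (g k)
  rw [Matrix.diag_apply]
  exact mul_le_mul_of_nonneg_right (by linarith) h1

lemma Jf_diag {n : ℕ} (g lam : Fin n → ℝ) (Φ Ψ : Matrix (Fin n) (Fin n) ℂ) :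
    Jf g (Φ * diagonal (fun k => (lam k : ℂ)) * Φᴴ) Ψ =
      ∑ k, ∑ l, g k * lam l * Complex.normSq ((Ψᴴ * Φ) k l) := by
  have : Ψᴴ * (Φ * diagonal (fun k => (lam k : ℂ)) * Φᴴ) * Ψ =
      (Ψᴴ * Φ) * diagonal (fun k => (lam k : ℂ)) * (Ψᴴ * Φ)ᴴ := by
    simp only [conjTranspose_mul, conjTranspose_conjTranspose, Matrix.mul_assoc]
  rw [Jf, this]
  refine Finset.sum_congr rfl fun k _ => ?_
  rw [Matrix.mul_apply, Complex.re_sum, Finset.mul_sum]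
  refine Finset.sum_congr rfl fun l _ => ?_
  rw [mul_diagonal, conjTranspose_apply]
  have : (Ψᴴ * Φ) k l * (lam l : ℂ) * star ((Ψᴴ * Φ) k l) =
    ((lam l * Complex.normSq ((Ψᴴ * Φ) k l) : ℝ) : ℂ) := by
    rw [Complex.ofReal_mul, Complex.normSq_eq_conj_mul_self]
    simp only [RCLike.star_def]; ring
  rw [this, Complex.ofReal_re]; ring

lemma sum_normSq_row {n : ℕ} (X : Matrix (Fin n) (Fin n) ℂ) (h : X * Xᴴ = 1) (k : Fin n) :
    ∑ l, Complex.normSq (X k l) = 1 := by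
  have := congrFun (congrFun h k) k
  rw [Matrix.mul_apply, Matrix.one_apply_eq] at this
  have h2 := congrArg Complex.re this
  rw [Complex.re_sum] at h2
  rw [← Complex.one_re, ← h2]
  refine Finset.sum_congr rfl fun l _ => ?_
  rw [conjTranspose_apply, RCLike.star_def, Complex.mul_conj, Complex.ofReal_re]

lemma sum_normSq_col {n : ℕ} (X : Matrix (Fin n) (Fin n) ℂ) (h : Xᴴ * X = 1) (l : Fin n) :
    ∑ k, Complex.normSq (X k l) = 1 := by
  have := sum_normSq_row Xᴴ (by rw [conjTranspose_conjTranspose]; exact h) l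
  rw [← this]
  refine Finset.sum_congr rfl fun k _ => ?_
  rw [conjTranspose_apply, RCLike.star_def, Complex.normSq_conj]

lemma Jf_min {n : ℕ} (g lam : Fin n → ℝ) (hg : Monotone g) (hl : Antitone lam)
    (Φ Ψ : Matrix (Fin n) (Fin n) ℂ) (hΦ : Φᴴ * Φ = 1) (hΨ : Ψᴴ * Ψ = 1) :
    Jf g (Φ * diagonal (fun k => (lam k : ℂ)) * Φᴴ) Φ ≤
      Jf g (Φ * diagonal (fun k => (lam k : ℂ)) * Φᴴ) Ψ := by
  have hΦ' := mul_eq_one_comm.mp hΦ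
  have hΨ' := mul_eq_one_comm.mp hΨ
  have e1 : Jf g (Φ * diagonal (fun k => (lam k : ℂ)) * Φᴴ) Φ = ∑ k, g k * lam k := by
    rw [Jf_diag, hΦ]
    refine Finset.sum_congr rfl fun k _ => ?_
    rw [Finset.sum_eq_single k]
    · simp
    · intro l _ hl
      rw [Matrix.one_apply_ne (Ne.symm hl)]; simp
    · simp
  rw [e1, Jf_diag]
  set X := Ψᴴ * Φ with hX
  have hX1 : Xᴴ * X = 1 := by
    rw [hX, conjTranspose_mul, conjTranspose_conjTranspose, Matrix.mul_assoc,
      ← Matrix.mul_assoc Ψ, hΨ', Matrix.one_mul, hΦ]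
  have hX2 := mul_eq_one_comm.mp hX1
  have hD : (Matrix.of fun k l => Complex.normSq (X k l)) ∈ doublyStochastic ℝ (Fin n) := by
    rw [mem_doublyStochastic_iff_sum]
    refine ⟨fun i j => Complex.normSq_nonneg _, fun k => sum_normSq_row X hX2 k,
      fun l => sum_normSq_col X hX1 l⟩
  obtain ⟨w, hw0, hw1, hw⟩ := exists_eq_sum_perm_of_mem_doublyStochastic hD
  have e2 : ∑ k, ∑ l, g k * lam l * Complex.normSq (X k l) =
      ∑ s : Equiv.Perm (Fin n), w s * ∑ k, g k * lam (s k) := by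
    have : ∀ k l, Complex.normSq (X k l) = ∑ s : Equiv.Perm (Fin n), w s * (if s k = l then 1 else 0) := by
      intro k l
      have := congrFun (congrFun hw k) l
      rw [of_apply] at this
      rw [← this, Matrix.sum_apply]
      refine Finset.sum_congr rfl fun s _ => ?_
      simp [Equiv.Perm.permMatrix, PEquiv.toMatrix_apply, Equiv.toPEquiv_apply, eq_comm]
    simp_rw [this, Finset.mul_sum]
    calc _ = ∑ k, ∑ s : Equiv.Perm (Fin n), ∑ l, g k * lam l * (w s * (if s k = l then 1 else 0)) :=
          Finset.sum_congr rfl fun k _ => Finset.sum_comm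
      _ = ∑ s : Equiv.Perm (Fin n), ∑ k, ∑ l, g k * lam l * (w s * (if s k = l then 1 else 0)) :=
          Finset.sum_comm
      _ = _ := by
          refine Finset.sum_congr rfl fun s _ => Finset.sum_congr rfl fun k _ => ?_
          simp; ring
  rw [e2]
  have hav : Antivary g lam := hg.antivary hl
  calc ∑ k, g k * lam k = ∑ s : Equiv.Perm (Fin n), w s * ∑ k, g k * lam k := by
        rw [← Finset.sum_mul, hw1, one_mul]
    _ ≤ _ := Finset.sum_le_sum fun s _ =>
        mul_le_mul_of_nonneg_left hav.sum_mul_le_sum_mul_comp_perm (hw0 s)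

lemma exists_min {n : ℕ} (g : Fin n → ℝ) (σ : Matrix (Fin n) (Fin n) ℂ) :
    ∃ Φ : Matrix (Fin n) (Fin n) ℂ, Φᴴ * Φ = 1 ∧
      ∀ Ψ : Matrix (Fin n) (Fin n) ℂ, Ψᴴ * Ψ = 1 → Jf g σ Φ ≤ Jf g σ Ψ := by
  have hc : IsCompact {Ψ : Matrix (Fin n) (Fin n) ℂ | Ψᴴ * Ψ = 1} := by
    have h1 : IsCompact (Set.pi Set.univ fun _ : Fin n => Set.pi Set.univ fun _ : Fin n =>
        Metric.closedBall (0 : ℂ) 1) :=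
      isCompact_univ_pi fun i => isCompact_univ_pi fun j => isCompact_closedBall 0 1
    refine h1.of_isClosed_subset ?_ ?_
    · exact isClosed_eq (by fun_prop) continuous_const
    · intro Ψ hΨ i _ j _
      rw [mem_closedBall_zero_iff]
      exact entry_norm_bound_of_unitary (mem_unitaryGroup_iff'.2 hΨ) i j
  have hJ : Continuous (fun Ψ => Jf g σ Ψ) := by
    unfold Jf
    refine continuous_finsetSum _ fun k _ => ?_
    refine continuous_const.mul (Complex.continuous_re.comp ?_)
    have : Continuous (fun Ψ : Matrix (Fin n) (Fin n) ℂ => Ψᴴ * σ * Ψ) := by fun_prop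
    exact this.matrix_elem k k
  obtain ⟨Φ, h1, h2⟩ := hc.exists_isMinOn ⟨1, by simp⟩ hJ.continuousOn
  exact ⟨Φ, h1, fun Ψ hΨ => h2 hΨ⟩

lemma perturb_ineq {n : ℕ} (g : Fin n → ℝ) (hg : StrictMono g) (τ : Matrix (Fin n) (Fin n) ℂ)
    (hτ : τᴴ = τ) (hmin : ∀ W : Matrix (Fin n) (Fin n) ℂ, Wᴴ * W = 1 →
      ∑ k, g k * (τ k k).re ≤ Jf g τ W) (i j : Fin n) (hij : i < j) (b : ℂ) :
    (star b * (τ j i + τ j j * b)).re ≤ Complex.normSq b * (τ i i + τ i j * b).re := by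
  have hne : i ≠ j := ne_of_lt hij
  set x : Fin n → ℂ := Pi.single i 1 + Pi.single j b with hx
  have hxi : x i = 1 := by simp [hx, hne]
  have hxj : x j = b := by simp [hx, hne.symm]
  have hx0 : ∀ k, k ≠ i ∧ k ≠ j → x k = 0 := by
    rintro k ⟨h1, h2⟩; simp [hx, h1, h2]
  set N : ℝ := 1 + Complex.normSq b with hN
  have hNpos : 0 < N := by have := Complex.normSq_nonneg b; positivity
  have hbb : star b * b = (Complex.normSq b : ℂ) := by
    rw [Complex.normSq_eq_conj_mul_self]; rfl
  have hxx : star x ⬝ᵥ x = (N : ℂ) := by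
    rw [dotProduct, Fintype.sum_eq_add i j hne (fun k hk => by simp [hx0 k hk])]
    simp only [Pi.star_apply, hxi, hxj, hbb, hN]; simp
  set y := τ *ᵥ x with hy
  have hyk : ∀ k, y k = τ k i + τ k j * b := by
    intro k
    rw [hy, mulVec, dotProduct, Fintype.sum_eq_add i j hne (fun k hk => by simp [hx0 k hk]), hxi, hxj,
      mul_one]
  set c : ℂ := ((2 / N : ℝ) : ℂ) with hc
  set P := vecMulVec x (star x) with hP
  have hPh : Pᴴ = P := by
    rw [hP, conjTranspose_vecMulVec, star_star]
  have hPP : P * P = (N : ℂ) • P := by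
    rw [hP, vecMulVec_mul_vecMulVec, hxx, vecMulVec_smul]
  have hcs : star c = c := by rw [hc]; exact Complex.conj_ofReal _
  have hcN : c * N = 2 := by
    rw [hc, ← Complex.ofReal_mul, div_mul_cancel₀ _ hNpos.ne']; simp
  set W := 1 - c • P with hW
  have hWh : Wᴴ = W := by
    rw [hW, conjTranspose_sub, conjTranspose_smul, hPh, hcs, conjTranspose_one]
  have hWW : Wᴴ * W = 1 := by
    rw [hWh, hW]
    have : (1 - c • P) * (1 - c • P) = 1 - (2 * c) • P + (c * c) • (P * P) := by
      simp only [sub_mul, mul_sub, Matrix.one_mul, Matrix.mul_one, smul_mul_assoc, mul_smul_comm]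
      module
    rw [this, hPP, smul_smul, mul_assoc, hcN]
    module
  have hWt : Wᴴ * τ * W = τ - c • vecMulVec x (star y) - c • vecMulVec y (star x)
      + (c * c * (star x ⬝ᵥ y)) • P := by
    have h1 : P * τ = vecMulVec x (star y) := by
      rw [hP, vecMulVec_mul, hy, star_mulVec, hτ]
    have h2 : τ * P = vecMulVec y (star x) := by
      rw [hP, mul_vecMulVec]
    have h3 : P * τ * P = (star x ⬝ᵥ y) • P := by
      rw [Matrix.mul_assoc, h2, hP, vecMulVec_mul_vecMulVec, vecMulVec_smul]
    have : Wᴴ * τ * W = τ - c • (P * τ) - c • (τ * P) + (c * c) • (P * τ * P) := by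
      rw [hWh, hW]
      simp only [sub_mul, mul_sub, Matrix.one_mul, Matrix.mul_one, smul_mul_assoc, mul_smul_comm]
      module
    rw [this, h3, h1, h2]
    module
  have hs : star x ⬝ᵥ y = y i + star b * y j := by
    rw [dotProduct, Fintype.sum_eq_add i j hne (fun k hk => by simp [hx0 k hk])]
    simp only [Pi.star_apply, hxi, hxj]; simp
  have h := hmin W hWW
  rw [Jf, hWt] at h
  set s := star x ⬝ᵥ y with hsdef
  have e : ∀ k, ((τ - c • vecMulVec x (star y) - c • vecMulVec y (star x)
      + (c * c * s) • P) k k).re = (τ k k).re +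
      (- 2 * (2 / N) * (star (x k) * y k).re + (2 / N)^2 * s.re * Complex.normSq (x k)) := by
    intro k
    have e1 : c * c * s * (x k * star (x k)) = (((2 / N)^2 * Complex.normSq (x k) : ℝ) : ℂ) * s := by
      rw [hc, RCLike.star_def, Complex.mul_conj]; push_cast; ring
    simp only [Matrix.add_apply, Matrix.sub_apply, Matrix.smul_apply, vecMulVec_apply, hP, smul_eq_mul,
      Pi.star_apply, e1, Complex.add_re, Complex.sub_re, Complex.re_ofReal_mul]
    rw [hc, Complex.re_ofReal_mul, Complex.re_ofReal_mul]
    simp only [RCLike.star_def, Complex.mul_re, Complex.conj_re, Complex.conj_im]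
    ring
  have h_split : ∑ k, g k * ((τ k k).re +
      (- 2 * (2 / N) * (star (x k) * y k).re + (2 / N)^2 * s.re * Complex.normSq (x k))) =
      ∑ k, g k * (τ k k).re + ∑ k, g k *
      (- 2 * (2 / N) * (star (x k) * y k).re + (2 / N)^2 * s.re * Complex.normSq (x k)) := by
    rw [← Finset.sum_add_distrib]
    exact Finset.sum_congr rfl fun k _ => mul_add _ _ _
  simp_rw [e] at h
  rw [h_split, le_add_iff_nonneg_right] at h
  rw [Fintype.sum_eq_add i j hne (fun k hk => by simp [hx0 k hk])] at h
  rw [hxi, hxj] at h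
  simp only [star_one, one_mul, map_one] at h
  have hsr : s.re = (y i).re + (star b * y j).re := by rw [hs, Complex.add_re]
  rw [← hyk, ← hyk]
  rw [hsr] at h
  set A := (y i).re
  set D := (star b * y j).re
  set m := Complex.normSq b
  have hgd : 0 < g j - g i := sub_pos.2 (hg hij)
  have h' : 0 ≤ (g j - g i) * (4 / N^2) * (m * A - D) := by
    have : (g j - g i) * (4 / N^2) * (m * A - D) = g i * (-2 * (2 / N) * A + (2 / N) ^ 2 * (A + D) * 1) +
      g j * (-2 * (2 / N) * D + (2 / N) ^ 2 * (A + D) * m) := by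
      field_simp
      rw [hN]; ring
    rw [this]; linarith
  have hp : 0 < (g j - g i) * (4 / N^2) := by positivity
  have := nonneg_of_mul_nonneg_right h' hp
  linarith

lemma perturb {n : ℕ} (g : Fin n → ℝ) (hg : StrictMono g) (τ : Matrix (Fin n) (Fin n) ℂ)
    (hτ : τᴴ = τ) (hmin : ∀ W : Matrix (Fin n) (Fin n) ℂ, Wᴴ * W = 1 →
      ∑ k, g k * (τ k k).re ≤ Jf g τ W) (i j : Fin n) (hij : i < j) :
    τ i j = 0 ∧ (τ j j).re ≤ (τ i i).re := by
  have hji : τ j i = star (τ i j) := by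
    have := congrFun (congrFun hτ j) i
    rw [conjTranspose_apply] at this; exact this.symm
  have key := perturb_ineq g hg τ hτ hmin i j hij
  set z := τ i j with hz
  have hjj : (τ j j).im = 0 := by
    have := congrFun (congrFun hτ j) j
    rw [conjTranspose_apply] at this
    exact Complex.conj_eq_iff_im.1 this
  constructor
  · by_contra hne
    have hpos : 0 < Complex.normSq z := Complex.normSq_pos.2 hne
    set m := Complex.normSq z with hm
    set p := (τ i i).re
    set q := (τ j j).re
    have h1 : ∀ d : ℝ, 0 < d → 1 ≤ d * (p - q) + d^2 * m := by
      intro d hd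
      have := key ((d : ℂ) * star z)
      rw [hji] at this
      have e1 : (star ((d : ℂ) * star z) * (star z + τ j j * ((d : ℂ) * star z))).re =
          d * m + d^2 * m * q := by
        have : star ((d : ℂ) * star z) * (star z + τ j j * ((d : ℂ) * star z)) =
          ((d * m : ℝ) : ℂ) + ((d^2 * m : ℝ) : ℂ) * τ j j := by
          simp only [star_mul', RCLike.star_def, Complex.conj_ofReal, hm, Complex.conj_conj]
          push_cast
          rw [← Complex.mul_conj]; ring
        rw [this, Complex.add_re, Complex.re_ofReal_mul, Complex.ofReal_re]
      have e2 : (τ i i + z * ((d : ℂ) * star z)).re = p + d * m := by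
        have : z * ((d : ℂ) * star z) = ((d * m : ℝ) : ℂ) := by
          rw [RCLike.star_def, hm]; push_cast; rw [← Complex.mul_conj]; ring
        rw [this, Complex.add_re, Complex.ofReal_re]
      have e3 : Complex.normSq ((d : ℂ) * star z) = d^2 * m := by
        rw [Complex.normSq_mul, Complex.normSq_ofReal, RCLike.star_def, Complex.normSq_conj]; ring
      rw [e1, e2, e3] at this
      have hdm : 0 < d * m := by positivity
      have h5 : 0 ≤ (d * m) * (d * (p - q) + d^2 * m - 1) := by nlinarith
      have := nonneg_of_mul_nonneg_right h5 hdm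
      linarith
    have hK : 0 < 2 * (|p - q| + m + 1) := by positivity
    have h2 := h1 (1 / (2 * (|p - q| + m + 1))) (by positivity)
    set d := 1 / (2 * (|p - q| + m + 1)) with hd
    have hd0 : 0 < d := by positivity
    have hd1 : d ≤ 1 := by
      rw [hd, div_le_one hK]; have := abs_nonneg (p - q); linarith
    have hdK : d * (|p - q| + m + 1) = 1 / 2 := by
      rw [hd]; field_simp
    have h3 := le_abs_self (p - q)
    nlinarith [mul_le_mul_of_nonneg_left h3 hd0.le, mul_le_mul_of_nonneg_right hd1 (by positivity : 0 ≤ d * m)]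
  · have h1 := key 1
    have h2 := key (-1)
    rw [hji] at h1 h2
    simp at h1 h2
    linarith

/-- the utility attained with the frame Ψ -/
def ell {n : ℕ} (r : ℝ) (ε : Fin n → ℝ) (v : Fin n → Fin n → ℂ)
    (ρ Ψ : Matrix (Fin n) (Fin n) ℂ) : ℝ :=
  ρ.trace.re / r - Jf (gw r ε) (sig r ε v ρ) Ψ

lemma ell_eq_lin {n : ℕ} (r : ℝ) (ε : Fin n → ℝ) (v : Fin n → Fin n → ℂ)
    (Ψ : Matrix (Fin n) (Fin n) ℂ) : ∃ L : Matrix (Fin n) (Fin n) ℂ →ₗ[ℝ] ℝ,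
      ∀ ρ, L ρ = ell r ε v ρ Ψ := by
  refine ⟨{ toFun := fun ρ => ell r ε v ρ Ψ, map_add' := ?_, map_smul' := ?_ }, fun ρ => rfl⟩
  · intro x y
    simp only [ell, Jf, sig, Matrix.mul_add, Matrix.add_mul, Matrix.trace_add, Complex.add_re,
      Matrix.add_apply, mul_add, Finset.sum_add_distrib]
    ring
  · intro c x
    simp only [ell, Jf, sig, Matrix.mul_smul, Matrix.smul_mul, Matrix.trace_smul, Complex.smul_re,
      Matrix.smul_apply, RingHom.id_apply, smul_eq_mul, mul_sub, Finset.mul_sum]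
    congr 1
    · ring
    · exact Finset.sum_congr rfl fun k _ => by ring

lemma ell_smul {n : ℕ} (r : ℝ) (ε : Fin n → ℝ) (v : Fin n → Fin n → ℂ)
    (ρ Ψ : Matrix (Fin n) (Fin n) ℂ) (c : ℝ) : ell r ε v ((c : ℂ) • ρ) Ψ = c * ell r ε v ρ Ψ := by
  obtain ⟨L, hL⟩ := ell_eq_lin r ε v Ψ
  rw [← hL, ← hL, Complex.coe_smul, map_smul, smul_eq_mul]

lemma ell_sum {n m : ℕ} (r : ℝ) (ε : Fin n → ℝ) (v : Fin n → Fin n → ℂ)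
    (ρ : Fin m → Matrix (Fin n) (Fin n) ℂ) (Ψ : Matrix (Fin n) (Fin n) ℂ) :
    ell r ε v (∑ a, ρ a) Ψ = ∑ a, ell r ε v (ρ a) Ψ := by
  obtain ⟨L, hL⟩ := ell_eq_lin r ε v Ψ
  simp_rw [← hL, map_sum]

lemma sig_psd {n : ℕ} (r : ℝ) (ε : Fin n → ℝ) (v : Fin n → Fin n → ℂ)
    (ρ : Matrix (Fin n) (Fin n) ℂ) (h : ρ.PosSemidef) : (sig r ε v ρ).PosSemidef := by
  have := h.mul_mul_conjTranspose_same (expHam ε v (-r/2))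
  rw [expHam_herm] at this
  exact this

/-- linear upper bound -/
def ub {n : ℕ} (r : ℝ) (ε : Fin n → ℝ) (v : Fin n → Fin n → ℂ) (ρ : Matrix (Fin n) (Fin n) ℂ) : ℝ :=
  ρ.trace.re / r + (∑ k, |gw r ε k|) * (sig r ε v ρ).trace.re

lemma ub_sum {n m : ℕ} (r : ℝ) (ε : Fin n → ℝ) (v : Fin n → Fin n → ℂ)
    (ρ : Fin m → Matrix (Fin n) (Fin n) ℂ) :
    ub r ε v (∑ a, ρ a) = ∑ a, ub r ε v (ρ a) := by
  simp only [ub, sig, Matrix.mul_sum, Matrix.sum_mul, Matrix.trace_sum, Complex.re_sum,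
    Finset.sum_add_distrib, Finset.sum_div]
  rw [Finset.mul_sum]

lemma ell_le_ub {n : ℕ} (r : ℝ) (ε : Fin n → ℝ) (v : Fin n → Fin n → ℂ)
    (ρ Ψ : Matrix (Fin n) (Fin n) ℂ) (h : ρ.PosSemidef) (hΨ : Ψᴴ * Ψ = 1) :
    ell r ε v ρ Ψ ≤ ub r ε v ρ := by
  have := Jf_lower (gw r ε) (sig r ε v ρ) Ψ (sig_psd r ε v ρ h) (mul_eq_one_comm.mp hΨ)
  rw [ell, ub]
  linarith

lemma optUtil_ell {n : ℕ} (r : ℝ) (ε : Fin n → ℝ) (v : Fin n → Fin n → ℂ)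
    (hv : ONFam v) (ρ : Matrix (Fin n) (Fin n) ℂ) :
    optUtil (expUtility r) (1/2) ε v ρ = ⨆ Ψ : Matrix.unitaryGroup (Fin n) ℂ,
      ell r ε v ρ (Ψ : Matrix (Fin n) (Fin n) ℂ) := optUtil_eq r ε v hv ρ

lemma ell_le_opt {n : ℕ} (r : ℝ) (ε : Fin n → ℝ) (v : Fin n → Fin n → ℂ) (hv : ONFam v)
    (ρ Ψ : Matrix (Fin n) (Fin n) ℂ) (h : ρ.PosSemidef) (hΨ : Ψᴴ * Ψ = 1) :
    ell r ε v ρ Ψ ≤ optUtil (expUtility r) (1/2) ε v ρ := by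
  rw [optUtil_ell r ε v hv]
  refine le_ciSup (f := fun Ψ : Matrix.unitaryGroup (Fin n) ℂ =>
    ell r ε v ρ (Ψ : Matrix (Fin n) (Fin n) ℂ)) ?_ ⟨Ψ, mem_unitaryGroup_iff'.2 hΨ⟩
  refine ⟨ub r ε v ρ, ?_⟩
  rintro _ ⟨Ψ, rfl⟩
  exact ell_le_ub r ε v ρ Ψ h (mem_unitaryGroup_iff'.1 Ψ.2)

lemma opt_le {n : ℕ} (r : ℝ) (ε : Fin n → ℝ) (v : Fin n → Fin n → ℂ) (hv : ONFam v)
    (ρ : Matrix (Fin n) (Fin n) ℂ) (c : ℝ) (h : ∀ Ψ, Ψᴴ * Ψ = 1 → ell r ε v ρ Ψ ≤ c) :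
    optUtil (expUtility r) (1/2) ε v ρ ≤ c := by
  rw [optUtil_ell r ε v hv]
  exact ciSup_le fun Ψ => h Ψ (mem_unitaryGroup_iff'.1 Ψ.2)

lemma cond_psd {dS dA : ℕ} (w : Fin dA → Fin dA → ℂ)
    (ρSA : Matrix (Fin dS × Fin dA) (Fin dS × Fin dA) ℂ) (h : ρSA.PosSemidef) (a : Fin dA) :
    (condUnnorm w ρSA a).PosSemidef := by
  have := h.mul_mul_conjTranspose_same
    (Matrix.of fun (i : Fin dS) (p : Fin dS × Fin dA) => if i = p.1 then star (w a p.2) else 0)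
  convert this using 1
  ext i j
  simp only [condUnnorm, of_apply, Matrix.mul_apply, conjTranspose_apply, Fintype.sum_prod_type,
    Finset.sum_mul, ite_mul, zero_mul, apply_ite star, star_star, star_zero, mul_ite, mul_zero]
  rw [Finset.sum_comm]
  simp [Finset.sum_ite_eq]
  refine Finset.sum_congr rfl fun d _ => ?_
  refine Finset.sum_congr rfl fun c _ => ?_
  ring

lemma daemonic_eq {dS dA : ℕ} (r : ℝ) (ε : Fin dS → ℝ) (v : Fin dS → Fin dS → ℂ) (hv : ONFam v)
    (w : Fin dA → Fin dA → ℂ)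
    (ρSA : Matrix (Fin dS × Fin dA) (Fin dS × Fin dA) ℂ) (h : ρSA.PosSemidef) :
    daemonicUtil (expUtility r) (1/2) ε v w ρSA =
      ∑ a, optUtil (expUtility r) (1/2) ε v (condUnnorm w ρSA a) := by
  refine Finset.sum_congr rfl fun a _ => ?_
  have hp := cond_psd w ρSA h a
  have h0 : 0 ≤ prob w ρSA a := (Complex.le_def.1 hp.trace_nonneg).1
  rw [optUtil_ell r ε v hv, optUtil_ell r ε v hv, Real.mul_iSup_of_nonneg h0]
  refine iSup_congr fun Ψ => ?_
  rw [condState, ← Complex.ofReal_inv, ell_smul]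
  by_cases hz : prob w ρSA a = 0
  · have : condUnnorm w ρSA a = 0 := by
      rw [← hp.trace_eq_zero_iff]
      apply Complex.ext
      · exact hz
      · exact (Complex.le_def.1 hp.trace_nonneg).2.symm
    obtain ⟨L, hL⟩ := ell_eq_lin r ε v (Ψ : Matrix (Fin dS) (Fin dS) ℂ)
    rw [hz, this, ← hL]; simp
  · rw [mul_inv_cancel_left₀ hz]

lemma sum_cond {dS dA : ℕ} (V : Matrix (Fin dA) (Fin dA) ℂ) (hV : Vᴴ * V = 1)
    (ρSA : Matrix (Fin dS × Fin dA) (Fin dS × Fin dA) ℂ) :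
    ∑ a, condUnnorm (fun a => V a) ρSA a = ptraceA ρSA := by
  ext i j
  rw [Matrix.sum_apply]
  simp only [condUnnorm, ptraceA, of_apply]
  rw [Finset.sum_comm]
  refine Finset.sum_congr rfl fun c _ => ?_
  rw [Finset.sum_comm]
  have : ∀ d, ∑ a, ρSA (i, c) (j, d) * (V a d * star (V a c)) =
      ρSA (i, c) (j, d) * (1 : Matrix (Fin dA) (Fin dA) ℂ) c d := by
    intro d
    rw [← hV, Matrix.mul_apply, Finset.mul_sum]
    refine Finset.sum_congr rfl fun a _ => ?_
    rw [conjTranspose_apply]; ring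
  simp_rw [this, Matrix.one_apply]
  simp

lemma daemonic_bdd {dS dA : ℕ} (r : ℝ) (ε : Fin dS → ℝ) (v : Fin dS → Fin dS → ℂ) (hv : ONFam v)
    (ρSA : Matrix (Fin dS × Fin dA) (Fin dS × Fin dA) ℂ) (h : ρSA.PosSemidef) :
    BddAbove (Set.range fun V : Matrix.unitaryGroup (Fin dA) ℂ =>
      daemonicUtil (expUtility r) (1/2) ε v (fun a => (V : Matrix (Fin dA) (Fin dA) ℂ) a) ρSA) := by
  refine ⟨ub r ε v (ptraceA ρSA), ?_⟩
  rintro _ ⟨V, rfl⟩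
  have hV : (V : Matrix (Fin dA) (Fin dA) ℂ)ᴴ * (V : Matrix (Fin dA) (Fin dA) ℂ) = 1 :=
    mem_unitaryGroup_iff'.1 V.2
  have h1 := sum_cond (V : Matrix (Fin dA) (Fin dA) ℂ) hV ρSA
  have h2 := daemonic_eq r ε v hv (fun a => (V : Matrix (Fin dA) (Fin dA) ℂ) a) ρSA h
  refine h2.le.trans ?_
  rw [← h1, ub_sum]
  refine Finset.sum_le_sum fun a _ => ?_
  exact opt_le r ε v hv _ _ fun Ψ hΨ => ell_le_ub r ε v _ Ψ (cond_psd _ ρSA h a) hΨ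

lemma exists_unitary_row {n : ℕ} (a : Fin n) (x : Fin n → ℂ) (hx : star x ⬝ᵥ x = 1) :
    ∃ V : Matrix.unitaryGroup (Fin n) ℂ, (V : Matrix (Fin n) (Fin n) ℂ) a = x := by
  have ho : Orthonormal ℂ (Set.domRestrict ({a} : Set (Fin n))
      (fun _ : Fin n => (WithLp.toLp 2 x : EuclideanSpace ℂ (Fin n)))) := by
    rw [orthonormal_iff_ite]
    rintro ⟨i, hi⟩ ⟨j, hj⟩
    simp only [Set.mem_singleton_iff] at hi hj
    subst hi; subst hj
    simp only [Set.domRestrict_apply, if_true]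
    rw [EuclideanSpace.inner_toLp_toLp, dotProduct_comm]; exact hx
  obtain ⟨b, hb⟩ := ho.exists_orthonormalBasis_extension_of_card_eq (by simp)
  refine ⟨⟨Matrix.of fun i j => b i j, ?_⟩, ?_⟩
  · rw [mem_unitaryGroup_iff]
    ext i j
    have := orthonormal_iff_ite.1 b.orthonormal j i
    rw [PiLp.inner_apply] at this
    rw [Matrix.mul_apply, Matrix.one_apply]
    simp only [eq_comm (a := j)] at this
    rw [← this]
    refine Finset.sum_congr rfl fun k _ => ?_
    simp [star_eq_conjTranspose]
  · have := hb a rfl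
    ext j
    change b a j = x j
    rw [this]

/-- conditional operator for an ancilla vector -/
def cv {dS dA : ℕ} (x : Fin dA → ℂ) (ρSA : Matrix (Fin dS × Fin dA) (Fin dS × Fin dA) ℂ) :
    Matrix (Fin dS) (Fin dS) ℂ :=
  Matrix.of fun i j => ∑ c, ∑ d, ρSA (i, c) (j, d) * (x d * star (x c))

lemma cond_eq_cv {dS dA : ℕ} (w : Fin dA → Fin dA → ℂ)
    (ρSA : Matrix (Fin dS × Fin dA) (Fin dS × Fin dA) ℂ) (a : Fin dA) :
    condUnnorm w ρSA a = cv (w a) ρSA := rfl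

lemma quad_expand {n : ℕ} (x : Fin n → ℂ) (M : Matrix (Fin n) (Fin n) ℂ) :
    star x ⬝ᵥ (M *ᵥ x) = ∑ c, ∑ d, M c d * (x d * star (x c)) := by
  simp only [dotProduct, mulVec, Finset.mul_sum, Pi.star_apply]
  exact Finset.sum_congr rfl fun c _ => Finset.sum_congr rfl fun d _ => by ring

lemma cv_decomp {dS dA : ℕ} (x : Fin dA → ℂ) (A : Fin dS → Matrix (Fin dS) (Fin dS) ℂ)
    (C : Fin dS → Matrix (Fin dA) (Fin dA) ℂ) :
    cv x (∑ k, A k ⊗ₖ C k) = ∑ k, (star x ⬝ᵥ (C k *ᵥ x)) • A k := by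
  ext i j
  simp only [cv, of_apply, Matrix.sum_apply, kroneckerMap_apply, Matrix.smul_apply, smul_eq_mul]
  simp_rw [quad_expand, Finset.sum_mul]
  rw [Finset.sum_comm' (t' := Finset.univ) (s' := fun _ => Finset.univ) (by simp)]
  calc _ = ∑ d, ∑ c, ∑ k, A k i j * C k c d * (x d * star (x c)) := rfl
    _ = ∑ d, ∑ k, ∑ c, A k i j * C k c d * (x d * star (x c)) :=
        Finset.sum_congr rfl fun d _ => Finset.sum_comm
    _ = ∑ k, ∑ d, ∑ c, A k i j * C k c d * (x d * star (x c)) := Finset.sum_comm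
    _ = _ := by
        refine Finset.sum_congr rfl fun k _ => ?_
        rw [Finset.sum_comm]
        refine Finset.sum_congr rfl fun c _ => Finset.sum_congr rfl fun d _ => ?_
        ring

lemma ptrace_decomp {dS dA : ℕ} (A : Fin dS → Matrix (Fin dS) (Fin dS) ℂ)
    (C : Fin dS → Matrix (Fin dA) (Fin dA) ℂ) :
    ptraceA (∑ k, A k ⊗ₖ C k) = ∑ k, (C k).trace • A k := by
  ext i j
  simp only [ptraceA, of_apply, Matrix.sum_apply, kroneckerMap_apply, Matrix.smul_apply, smul_eq_mul,
    Matrix.trace, Matrix.diag_apply, Finset.sum_mul]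
  rw [Finset.sum_comm]
  exact Finset.sum_congr rfl fun c _ => Finset.sum_congr rfl fun d _ => by ring

lemma sig_decomp {n : ℕ} (r : ℝ) (ε : Fin n → ℝ) (v : Fin n → Fin n → ℂ) (hv : ONFam v)
    (φ : Fin n → Fin n → ℂ) (c : Fin n → ℂ) :
    sig r ε v (∑ k, c k • (expHam ε v (r/2) * ketbra (φ k) (φ k) * expHam ε v (r/2))) =
      ∑ k, c k • ketbra (φ k) (φ k) := by
  have h1 := expHam_mul ε v hv (-r/2) (r/2) (by ring)
  have h2 := expHam_mul ε v hv (r/2) (-r/2) (by ring)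
  rw [sig, Matrix.mul_sum, Matrix.sum_mul]
  refine Finset.sum_congr rfl fun k _ => ?_
  rw [Matrix.mul_smul, Matrix.smul_mul]
  congr 1
  calc _ = (expHam ε v (-r/2) * expHam ε v (r/2)) * ketbra (φ k) (φ k) *
        (expHam ε v (r/2) * expHam ε v (-r/2)) := by simp only [Matrix.mul_assoc]
    _ = _ := by rw [h1, h2, Matrix.one_mul, Matrix.mul_one]

lemma antitone_of_succ {n : ℕ} (f : Fin n → ℝ)
    (h : ∀ (k : Fin n) (hk : (k : ℕ) + 1 < n), f ⟨(k : ℕ) + 1, hk⟩ ≤ f k) : Antitone f := by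
  cases n with
  | zero => exact fun i => i.elim0
  | succ m =>
    rw [Fin.antitone_iff_succ_le]
    intro i
    exact h i.castSucc (by simp)

lemma opt_of_diag {n : ℕ} (r : ℝ) (hr : r ≠ 0) (ε : Fin n → ℝ) (hε : StrictMono ε)
    (v : Fin n → Fin n → ℂ) (hv : ONFam v)
    (φ : Fin n → Fin n → ℂ) (hφ : ONFam φ) (lam : Fin n → ℝ) (hl : Antitone lam)
    (ρ : Matrix (Fin n) (Fin n) ℂ) (hρ : ρ.PosSemidef)
    (h : sig r ε v ρ = ∑ k, (lam k : ℂ) • ketbra (φ k) (φ k)) :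
    optUtil (expUtility r) (1/2) ε v ρ = ell r ε v ρ (colM φ) := by
  rw [onfam_iff] at hφ
  apply le_antisymm
  · apply opt_le r ε v hv
    intro Ψ hΨ
    have := Jf_min (gw r ε) lam (gw_strictMono r hr ε hε).monotone hl (colM φ) Ψ hφ hΨ
    rw [← sum_ketbra φ (fun k => (lam k : ℂ)), ← h] at this
    rw [ell, ell]; linarith
  · exact ell_le_opt r ε v hv ρ _ hρ hφ

lemma psd_quad_real {n : ℕ} (M : Matrix (Fin n) (Fin n) ℂ) (hM : M.PosSemidef) (x : Fin n → ℂ) :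
    star x ⬝ᵥ (M *ᵥ x) = ((star x ⬝ᵥ (M *ᵥ x)).re : ℂ) := by
  have := hM.dotProduct_mulVec_nonneg x
  apply Complex.ext
  · simp
  · exact (Complex.le_def.1 this).2.symm

lemma backward {dS dA : ℕ} (r : ℝ) (hr : r ≠ 0)
    (ε : Fin dS → ℝ) (hε : StrictMono ε)
    (v : Fin dS → Fin dS → ℂ) (hv : ONFam v)
    (ρSA : Matrix (Fin dS × Fin dA) (Fin dS × Fin dA) ℂ) (hρSA : IsDensity ρSA)
    (uvals : Fin dS → ℝ) (φ : Fin dS → Fin dS → ℂ)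
    (C : Fin dS → Matrix (Fin dA) (Fin dA) ℂ)
    (hφ : ONFam φ) (hu : Antitone uvals)
    (hS : expHam ε v (-r/2) * ptraceA ρSA * expHam ε v (-r/2)
          = ∑ k, (uvals k : ℂ) • ketbra (φ k) (φ k))
    (hC : ∀ k, (C k).PosSemidef)
    (hCC : ∀ (k : Fin dS) (h : (k : ℕ) + 1 < dS), (C k - C ⟨(k : ℕ) + 1, h⟩).PosSemidef)
    (hd : ρSA = ∑ k, (expHam ε v (r/2) * ketbra (φ k) (φ k) * expHam ε v (r/2)) ⊗ₖ C k) :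
    daemonicGain (expUtility r) (1/2) ε v ρSA = 0 := by
  have hpS : (ptraceA ρSA).PosSemidef := by
    rw [← sum_cond (1 : Matrix (Fin dA) (Fin dA) ℂ) (by simp) ρSA]
    exact posSemidef_sum _ fun a _ => cond_psd _ ρSA hρSA.1 a
  have h1 := opt_of_diag r hr ε hε v hv φ hφ uvals hu (ptraceA ρSA) hpS hS
  have key : ∀ V : Matrix.unitaryGroup (Fin dA) ℂ,
      daemonicUtil (expUtility r) (1/2) ε v (fun a => (V : Matrix (Fin dA) (Fin dA) ℂ) a) ρSA =
        optUtil (expUtility r) (1/2) ε v (ptraceA ρSA) := by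
    intro V
    have hV : (V : Matrix (Fin dA) (Fin dA) ℂ)ᴴ * (V : Matrix (Fin dA) (Fin dA) ℂ) = 1 :=
      mem_unitaryGroup_iff'.1 V.2
    rw [daemonic_eq r ε v hv _ ρSA hρSA.1, h1]
    rw [← sum_cond (V : Matrix (Fin dA) (Fin dA) ℂ) hV ρSA, ell_sum]
    refine Finset.sum_congr rfl fun a _ => ?_
    set x := (V : Matrix (Fin dA) (Fin dA) ℂ) a with hx
    refine opt_of_diag r hr ε hε v hv φ hφ (fun k => (star x ⬝ᵥ (C k *ᵥ x)).re) ?_ _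
      (cond_psd _ ρSA hρSA.1 a) ?_
    · apply antitone_of_succ
      intro k hk
      have := (Complex.le_def.1 ((hCC k hk).dotProduct_mulVec_nonneg x)).1
      rw [sub_mulVec, dotProduct_sub, Complex.sub_re] at this
      simpa using this
    · rw [cond_eq_cv, hd, cv_decomp, sig_decomp r ε v hv]
      refine Finset.sum_congr rfl fun k _ => ?_
      rw [← psd_quad_real _ (hC k)]
  rw [daemonicGain]
  simp_rw [key]
  rw [ciSup_const, sub_self]

lemma separable {dS dA : ℕ} (r : ℝ)
    (ε : Fin dS → ℝ) (v : Fin dS → Fin dS → ℂ) (hv : ONFam v)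
    (ρSA : Matrix (Fin dS × Fin dA) (Fin dS × Fin dA) ℂ) (hρSA : IsDensity ρSA)
    (φ : Fin dS → Fin dS → ℂ)
    (C : Fin dS → Matrix (Fin dA) (Fin dA) ℂ)
    (hφ : ONFam φ)
    (hC : ∀ k, (C k).PosSemidef)
    (hd : ρSA = ∑ k, (expHam ε v (r/2) * ketbra (φ k) (φ k) * expHam ε v (r/2)) ⊗ₖ C k) :
    IsSeparable ρSA := by
  set A : Fin dS → Matrix (Fin dS) (Fin dS) ℂ := fun k =>
    expHam ε v (r/2) * ketbra (φ k) (φ k) * expHam ε v (r/2) with hA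
  have hAp : ∀ k, (A k).PosSemidef := by
    intro k
    have := (posSemidef_vecMulVec_self_star (φ k)).mul_mul_conjTranspose_same (expHam ε v (r/2))
    rw [expHam_herm] at this
    exact this
  have hA0 : ∀ k, (A k).trace ≠ 0 := by
    intro k h0
    rw [(hAp k).trace_eq_zero_iff] at h0
    have h1 := sig_decomp r ε v hv φ (Pi.single k 1)
    rw [Finset.sum_eq_single k (by intro b _ hb; simp [hb]) (by simp),
      Finset.sum_eq_single k (by intro b _ hb; simp [hb]) (by simp)] at h1
    rw [Pi.single_eq_same, one_smul, one_smul] at h1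
    have h2 : ketbra (φ k) (φ k) = 0 := by
      rw [← h1]; change sig r ε v (A k) = 0
      rw [h0, sig]; simp
    have h3 : (ketbra (φ k) (φ k)).trace = 1 := by
      rw [ketbra, trace_vecMulVec, dotProduct_comm, hφ k k, if_pos rfl]
    rw [h2] at h3; simp at h3
  have htr : ∀ {m : ℕ} (M : Matrix (Fin m) (Fin m) ℂ), M.PosSemidef →
      M.trace = (M.trace.re : ℂ) ∧ 0 ≤ M.trace.re := by
    intro m M hM
    have := Complex.le_def.1 hM.trace_nonneg
    refine ⟨Complex.ext (by simp) this.2.symm, this.1⟩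
  have hnorm : ∀ {m : ℕ} (M : Matrix (Fin m) (Fin m) ℂ), M.PosSemidef → M.trace ≠ 0 →
      IsDensity ((M.trace)⁻¹ • M) := by
    intro m M hM h0
    refine ⟨?_, ?_⟩
    · obtain ⟨h1, h2⟩ := htr M hM
      refine hM.smul ?_
      rw [h1, ← Complex.ofReal_inv]
      exact_mod_cast inv_nonneg.2 h2
    · rw [Matrix.trace_smul, smul_eq_mul, inv_mul_cancel₀ h0]
  have hT : ∑ k, (A k).trace * (C k).trace = 1 := by
    rw [← hρSA.2, hd, Matrix.trace_sum]
    exact Finset.sum_congr rfl fun k _ => (trace_kronecker _ _).symm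
  obtain ⟨k0, hk0⟩ : ∃ k, (C k).trace ≠ 0 := by
    by_contra hcon
    push Not at hcon
    simp [hcon] at hT
  refine ⟨dS, fun k => (A k).trace.re * (C k).trace.re, fun k => ((A k).trace)⁻¹ • A k,
    fun k => if (C k).trace = 0 then ((C k0).trace)⁻¹ • C k0 else ((C k).trace)⁻¹ • C k,
    ?_, ?_, ?_, ?_, ?_⟩
  · intro k
    exact mul_nonneg (htr _ (hAp k)).2 (htr _ (hC k)).2
  · have := congrArg Complex.re hT
    rw [Complex.re_sum, Complex.one_re] at this
    rw [← this]
    refine Finset.sum_congr rfl fun k _ => ?_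
    rw [(htr _ (hAp k)).1, (htr _ (hC k)).1, ← Complex.ofReal_mul, Complex.ofReal_re]
  · intro k; exact hnorm _ (hAp k) (hA0 k)
  · intro k
    dsimp only
    split_ifs with h
    · exact hnorm _ (hC k0) hk0
    · exact hnorm _ (hC k) h
  · rw [hd]
    refine Finset.sum_congr rfl fun k _ => ?_
    dsimp only
    rw [Complex.ofReal_mul, ← (htr _ (hAp k)).1, ← (htr _ (hC k)).1]
    split_ifs with h
    · have h0 := (hC k).trace_eq_zero_iff.1 h
      rw [h, h0]; simp
    · rw [smul_kronecker, kronecker_smul, smul_smul, smul_smul]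
      have : (A k).trace * (C k).trace * ((A k).trace)⁻¹ * ((C k).trace)⁻¹ = 1 := by
        have := hA0 k
        field_simp
      rw [this, one_smul]

lemma quad_zero {n : ℕ} (M : Matrix (Fin n) (Fin n) ℂ)
    (h : ∀ x : Fin n → ℂ, star x ⬝ᵥ (M *ᵥ x) = 0) : M = 0 := by
  have h1 : Matrix.toEuclideanLin M = 0 := by
    rw [← inner_map_self_eq_zero]
    intro x
    have := h (WithLp.ofLp x)
    have e : inner ℂ x (Matrix.toEuclideanLin M x) = 0 := by
      rw [← this, dotProduct_comm]; rfl
    rw [← inner_conj_symm, e, map_zero]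
  exact (LinearEquiv.map_eq_zero_iff _).1 h1

lemma fwd_unit {dS dA : ℕ} (r : ℝ) (hr : r ≠ 0)
    (ε : Fin dS → ℝ) (hε : StrictMono ε)
    (v : Fin dS → Fin dS → ℂ) (hv : ONFam v)
    (ρSA : Matrix (Fin dS × Fin dA) (Fin dS × Fin dA) ℂ) (hρSA : IsDensity ρSA)
    (h : daemonicGain (expUtility r) (1/2) ε v ρSA = 0) :
    ∃ Φ : Matrix (Fin dS) (Fin dS) ℂ, Φᴴ * Φ = 1 ∧ ∀ x : Fin dA → ℂ, star x ⬝ᵥ x = 1 →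
      ∀ i j, i < j → (Φᴴ * sig r ε v (cv x ρSA) * Φ) i j = 0 ∧
        (Φᴴ * sig r ε v (cv x ρSA) * Φ) j i = 0 ∧
        ((Φᴴ * sig r ε v (cv x ρSA) * Φ) j j).re ≤ ((Φᴴ * sig r ε v (cv x ρSA) * Φ) i i).re := by
  obtain ⟨Φ, hΦ, hmin⟩ := exists_min (gw r ε) (sig r ε v (ptraceA ρSA))
  refine ⟨Φ, hΦ, fun x hx i j hij => ?_⟩
  have hopt : optUtil (expUtility r) (1/2) ε v (ptraceA ρSA) ≤ ell r ε v (ptraceA ρSA) Φ := by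
    apply opt_le r ε v hv
    intro Ψ hΨ
    have := hmin Ψ hΨ
    rw [ell, ell]; linarith
  have hA : 0 < dA := by
    rcases Nat.eq_zero_or_pos dA with h0 | h0
    · subst h0; simp [dotProduct] at hx
    · exact h0
  obtain ⟨V, hVx⟩ := exists_unitary_row ⟨0, hA⟩ x hx
  have hV : (V : Matrix (Fin dA) (Fin dA) ℂ)ᴴ * (V : Matrix (Fin dA) (Fin dA) ℂ) = 1 :=
    mem_unitaryGroup_iff'.1 V.2
  have h1 := le_ciSup (daemonic_bdd r ε v hv ρSA hρSA.1) V
  rw [daemonicGain, sub_eq_zero] at h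
  have h2 : ∑ a, optUtil (expUtility r) (1/2) ε v
      (condUnnorm (fun a => (V : Matrix (Fin dA) (Fin dA) ℂ) a) ρSA a) ≤
      ∑ a, ell r ε v (condUnnorm (fun a => (V : Matrix (Fin dA) (Fin dA) ℂ) a) ρSA a) Φ := by
    rw [← ell_sum, sum_cond (V : Matrix (Fin dA) (Fin dA) ℂ) hV ρSA,
      ← daemonic_eq r ε v hv _ ρSA hρSA.1]
    exact h1.trans (h.le.trans hopt)
  have h3 : ∀ a ∈ Finset.univ,
      ell r ε v (condUnnorm (fun a => (V : Matrix (Fin dA) (Fin dA) ℂ) a) ρSA a) Φ ≤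
      optUtil (expUtility r) (1/2) ε v
      (condUnnorm (fun a => (V : Matrix (Fin dA) (Fin dA) ℂ) a) ρSA a) := fun a _ =>
    ell_le_opt r ε v hv _ Φ (cond_psd _ ρSA hρSA.1 a) hΦ
  have h4 := (Finset.sum_eq_sum_iff_of_le h3).1 (le_antisymm (Finset.sum_le_sum h3) h2)
    ⟨0, hA⟩ (Finset.mem_univ _)
  have hp := cond_psd (fun a => (V : Matrix (Fin dA) (Fin dA) ℂ) a) ρSA hρSA.1 ⟨0, hA⟩
  rw [cond_eq_cv] at h4 hp
  rw [hVx] at h4 hp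
  set τ := Φᴴ * sig r ε v (cv x ρSA) * Φ with hτ
  have hherm : τᴴ = τ := ((sig_psd r ε v _ hp).conjTranspose_mul_mul_same Φ).isHermitian
  have hp2 := perturb (gw r ε) (gw_strictMono r hr ε hε) τ hherm ?_ i j hij
  · refine ⟨hp2.1, ?_, hp2.2⟩
    rw [← hherm, conjTranspose_apply, hp2.1, star_zero]
  · intro W hW
    have hW2 : (Φ * W)ᴴ * (Φ * W) = 1 := by
      rw [conjTranspose_mul, Matrix.mul_assoc, ← Matrix.mul_assoc Φᴴ, hΦ, Matrix.one_mul, hW]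
    have h5 := ell_le_opt r ε v hv (cv x ρSA) (Φ * W) hp hW2
    rw [← h4, ell, ell] at h5
    have e1 : Jf (gw r ε) τ W = Jf (gw r ε) (sig r ε v (cv x ρSA)) (Φ * W) := by
      rw [Jf, Jf, hτ, conjTranspose_mul]
      simp only [Matrix.mul_assoc]
    have e2 : ∑ k, gw r ε k * (τ k k).re = Jf (gw r ε) (sig r ε v (cv x ρSA)) Φ := rfl
    rw [e1, e2]; linarith

/-- A-blocks of the rotated effective state -/
def blk {dS dA : ℕ} (Z : Matrix (Fin dS) (Fin dS) ℂ)
    (ρSA : Matrix (Fin dS × Fin dA) (Fin dS × Fin dA) ℂ) (i j : Fin dS) :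
    Matrix (Fin dA) (Fin dA) ℂ :=
  Matrix.of fun c d => (Z * (Matrix.of fun k l => ρSA (k, c) (l, d)) * Zᴴ) i j

lemma blk_quad {dS dA : ℕ} (Z : Matrix (Fin dS) (Fin dS) ℂ)
    (ρSA : Matrix (Fin dS × Fin dA) (Fin dS × Fin dA) ℂ) (i j : Fin dS) (x : Fin dA → ℂ) :
    (Z * cv x ρSA * Zᴴ) i j = star x ⬝ᵥ (blk Z ρSA i j *ᵥ x) := by
  have : cv x ρSA = ∑ c, ∑ d, (x d * star (x c)) •
      (Matrix.of fun k l => ρSA (k, c) (l, d) : Matrix (Fin dS) (Fin dS) ℂ) := by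
    ext k l
    simp only [cv, of_apply, Matrix.sum_apply, Matrix.smul_apply, smul_eq_mul]
    exact Finset.sum_congr rfl fun c _ => Finset.sum_congr rfl fun d _ => by ring
  rw [this, quad_expand]
  simp only [Matrix.mul_sum, Matrix.sum_mul, Matrix.sum_apply, Matrix.mul_smul, Matrix.smul_mul,
    Matrix.smul_apply, smul_eq_mul, blk, of_apply]
  exact Finset.sum_congr rfl fun c _ => Finset.sum_congr rfl fun d _ => by ring

lemma blk_psd {dS dA : ℕ} (Z : Matrix (Fin dS) (Fin dS) ℂ)
    (ρSA : Matrix (Fin dS × Fin dA) (Fin dS × Fin dA) ℂ) (h : ρSA.PosSemidef) (k : Fin dS) :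
    (blk Z ρSA k k).PosSemidef := by
  have := h.mul_mul_conjTranspose_same
    (Matrix.of fun (c : Fin dA) (p : Fin dS × Fin dA) => if c = p.2 then Z k p.1 else 0)
  convert this using 1
  ext c d
  simp only [blk, of_apply, Matrix.mul_apply, conjTranspose_apply, Fintype.sum_prod_type,
    Finset.sum_mul, ite_mul, zero_mul, apply_ite star, star_zero, mul_ite, mul_zero]
  simp [Finset.sum_ite_eq]

lemma cv_smul {dS dA : ℕ} (x : Fin dA → ℂ) (ρSA : Matrix (Fin dS × Fin dA) (Fin dS × Fin dA) ℂ)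
    (s : ℝ) : cv (fun a => (s : ℂ) * x a) ρSA = ((s^2 : ℝ) : ℂ) • cv x ρSA := by
  ext i j
  simp only [cv, of_apply, Matrix.smul_apply, smul_eq_mul, Finset.mul_sum]
  refine Finset.sum_congr rfl fun c _ => Finset.sum_congr rfl fun d _ => ?_
  simp only [star_mul', RCLike.star_def, Complex.conj_ofReal]
  push_cast; ring

lemma scale_unit {n : ℕ} (x : Fin n → ℂ) (hx : x ≠ 0) : ∃ s : ℝ, 0 < s ∧
    star (fun a => (s : ℂ) * x a) ⬝ᵥ (fun a => (s : ℂ) * x a) = 1 := by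
  have h0 : 0 ≤ star x ⬝ᵥ x := dotProduct_star_self_nonneg x
  have h1 : star x ⬝ᵥ x ≠ 0 := by rwa [Ne, dotProduct_star_self_eq_zero]
  set m := (star x ⬝ᵥ x).re with hm
  have hm2 : star x ⬝ᵥ x = (m : ℂ) := Complex.ext (by simp [hm]) (Complex.le_def.1 h0).2.symm
  have hm0 : 0 < m := by
    refine lt_of_le_of_ne (Complex.le_def.1 h0).1 ?_
    intro hh
    apply h1
    rw [hm2, ← hh]; simp
  refine ⟨(Real.sqrt m)⁻¹, by positivity, ?_⟩
  have e : star (fun a => (((Real.sqrt m)⁻¹ : ℝ) : ℂ) * x a) ⬝ᵥ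
      (fun a => (((Real.sqrt m)⁻¹ : ℝ) : ℂ) * x a) =
      (((Real.sqrt m)⁻¹ ^ 2 : ℝ) : ℂ) * (star x ⬝ᵥ x) := by
    simp only [dotProduct, Finset.mul_sum, Pi.star_apply]
    refine Finset.sum_congr rfl fun c _ => ?_
    simp only [star_mul', RCLike.star_def, Complex.conj_ofReal]
    push_cast; ring
  rw [e, hm2, ← Complex.ofReal_mul, inv_pow, Real.sq_sqrt hm0.le, inv_mul_cancel₀ hm0.ne']
  simp

lemma forward {dS dA : ℕ} (r : ℝ) (hr : r ≠ 0)
    (ε : Fin dS → ℝ) (hε : StrictMono ε)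
    (v : Fin dS → Fin dS → ℂ) (hv : ONFam v)
    (ρSA : Matrix (Fin dS × Fin dA) (Fin dS × Fin dA) ℂ) (hρSA : IsDensity ρSA)
    (h : daemonicGain (expUtility r) (1/2) ε v ρSA = 0) :
      ∃ (uvals : Fin dS → ℝ) (φ : Fin dS → Fin dS → ℂ)
        (C : Fin dS → Matrix (Fin dA) (Fin dA) ℂ),
        ONFam φ ∧ Antitone uvals ∧
        (expHam ε v (-r/2) * ptraceA ρSA * expHam ε v (-r/2)
          = ∑ k, (uvals k : ℂ) • ketbra (φ k) (φ k)) ∧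
        (∀ k, (C k).PosSemidef) ∧
        (∀ (k : Fin dS) (h : (k : ℕ) + 1 < dS), (C k - C ⟨(k : ℕ) + 1, h⟩).PosSemidef) ∧
        ρSA = ∑ k, (expHam ε v (r/2) * ketbra (φ k) (φ k) * expHam ε v (r/2)) ⊗ₖ C k := by
  obtain ⟨Φ, hΦ, hu⟩ := fwd_unit r hr ε hε v hv ρSA hρSA h
  have hΦ' := mul_eq_one_comm.mp hΦ
  set Z := Φᴴ * expHam ε v (-r/2) with hZ
  have hZh : Zᴴ = expHam ε v (-r/2) * Φ := by
    rw [hZ, conjTranspose_mul, conjTranspose_conjTranspose, expHam_herm]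
  have hZe : ∀ x, Φᴴ * sig r ε v (cv x ρSA) * Φ = Z * cv x ρSA * Zᴴ := by
    intro x
    rw [hZh, hZ, sig]; simp only [Matrix.mul_assoc]
  have hall : ∀ x : Fin dA → ℂ, ∀ i j, i < j →
      star x ⬝ᵥ (blk Z ρSA i j *ᵥ x) = 0 ∧ star x ⬝ᵥ (blk Z ρSA j i *ᵥ x) = 0 ∧
      (star x ⬝ᵥ (blk Z ρSA j j *ᵥ x)).re ≤ (star x ⬝ᵥ (blk Z ρSA i i *ᵥ x)).re := by
    intro x i j hij
    by_cases hx : x = 0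
    · subst hx; simp
    obtain ⟨s, hs, hs1⟩ := scale_unit x hx
    have := hu _ hs1 i j hij
    rw [hZe, cv_smul, Matrix.mul_smul, Matrix.smul_mul] at this
    simp only [Matrix.smul_apply, smul_eq_mul, Complex.re_ofReal_mul, blk_quad] at this
    obtain ⟨t1, t2, t3⟩ := this
    have hs2 : 0 < s^2 := by positivity
    have hs3 : ((s^2 : ℝ) : ℂ) ≠ 0 := Complex.ofReal_ne_zero.2 hs2.ne'
    exact ⟨(mul_eq_zero.1 t1).resolve_left hs3, (mul_eq_zero.1 t2).resolve_left hs3,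
      le_of_mul_le_mul_left t3 hs2⟩
  have hoff : ∀ i j, i ≠ j → blk Z ρSA i j = 0 := by
    intro i j hij
    rcases lt_or_gt_of_ne hij with hl | hl
    · exact quad_zero _ fun x => (hall x i j hl).1
    · exact quad_zero _ fun x => (hall x j i hl).2.1
  set C : Fin dS → Matrix (Fin dA) (Fin dA) ℂ := fun k => blk Z ρSA k k with hCdef
  have hC : ∀ k, (C k).PosSemidef := fun k => blk_psd Z ρSA hρSA.1 k
  have hCC : ∀ (k : Fin dS) (h : (k : ℕ) + 1 < dS), (C k - C ⟨(k : ℕ) + 1, h⟩).PosSemidef := by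
    intro k hk
    refine PosSemidef.of_dotProduct_mulVec_nonneg
      ((hC k).isHermitian.sub (hC _).isHermitian) fun x => ?_
    have := (hall x k ⟨(k : ℕ) + 1, hk⟩ (Fin.lt_def.2 (Nat.lt_succ_self _))).2.2
    rw [sub_mulVec, dotProduct_sub, sub_nonneg]
    exact Complex.le_def.2 ⟨this,
      (Complex.le_def.1 ((hC _).dotProduct_mulVec_nonneg x)).2.symm.trans
        (Complex.le_def.1 ((hC k).dotProduct_mulVec_nonneg x)).2⟩
  set φ : Fin dS → Fin dS → ℂ := fun k i => Φ i k with hφ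
  have hcol : colM φ = Φ := rfl
  have hON : ONFam φ := (onfam_iff φ).2 hΦ
  have hd : ρSA = ∑ k, (expHam ε v (r/2) * ketbra (φ k) (φ k) * expHam ε v (r/2)) ⊗ₖ C k := by
    ext ⟨i, c⟩ ⟨j, d⟩
    set S : Matrix (Fin dS) (Fin dS) ℂ := Matrix.of fun k l => ρSA (k, c) (l, d) with hS
    have hT : Z * S * Zᴴ = diagonal (fun k => C k c d) := by
      ext k l
      by_cases hkl : k = l
      · subst hkl; rw [diagonal_apply_eq]; rfl
      · rw [diagonal_apply_ne _ hkl]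
        exact congrFun (congrFun (hoff k l hkl) c) d
    have h1 := expHam_mul ε v hv (-r/2) (r/2) (by ring)
    have h2 := expHam_mul ε v hv (r/2) (-r/2) (by ring)
    have hYZ : (expHam ε v (r/2) * Φ) * Z = 1 := by
      rw [hZ, Matrix.mul_assoc, ← Matrix.mul_assoc Φ, hΦ', Matrix.one_mul, h2]
    have hZY : Zᴴ * (Φᴴ * expHam ε v (r/2)) = 1 := by
      rw [hZh, Matrix.mul_assoc, ← Matrix.mul_assoc Φ, hΦ', Matrix.one_mul, h1]
    have hSe : S = expHam ε v (r/2) * (∑ k, C k c d • ketbra (φ k) (φ k)) * expHam ε v (r/2) := by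
      rw [sum_ketbra, hcol, ← hT]
      calc S = (expHam ε v (r/2) * Φ * Z) * S * (Zᴴ * (Φᴴ * expHam ε v (r/2))) := by
            rw [hYZ, hZY, Matrix.one_mul, Matrix.mul_one]
        _ = _ := by simp only [Matrix.mul_assoc]
    have : ρSA (i, c) (j, d) = S i j := rfl
    rw [this, hSe, Matrix.mul_sum, Matrix.sum_mul, Matrix.sum_apply, Matrix.sum_apply]
    refine Finset.sum_congr rfl fun k _ => ?_
    rw [kroneckerMap_apply, Matrix.mul_smul, Matrix.smul_mul, Matrix.smul_apply, smul_eq_mul, mul_comm]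
  refine ⟨fun k => (C k).trace.re, φ, C, hON, ?_, ?_, hC, hCC, hd⟩
  · apply antitone_of_succ
    intro k hk
    have := (Complex.le_def.1 (hCC k hk).trace_nonneg).1
    rw [Matrix.trace_sub, Complex.sub_re] at this
    simpa using this
  · change sig r ε v (ptraceA ρSA) = _
    conv_lhs => rw [hd]
    rw [ptrace_decomp, sig_decomp r ε v hv]
    refine Finset.sum_congr rfl fun k _ => ?_
    congr 1
    exact Complex.ext (by simp) (Complex.le_def.1 (hC k).trace_nonneg).2.symm

/-- Theorem 1: for the exponential utility with `r ≠ 0` and `q = 1/2`,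
the maximum daemonic gain vanishes iff `ρ_SA = ∑ₖ (e^{rH_S/2}|uₖ⟩⟨uₖ|e^{rH_S/2}) ⊗ C^A_k`
with `C^A_k ≥ C^A_{k+1} ≥ 0`; in particular every such state is separable. -/
theorem stmt4 {dS dA : ℕ} (r : ℝ) (hr : r ≠ 0)
    (ε : Fin dS → ℝ) (hε : StrictMono ε)
    (v : Fin dS → Fin dS → ℂ) (hv : ONFam v)
    (ρSA : Matrix (Fin dS × Fin dA) (Fin dS × Fin dA) ℂ) (hρSA : IsDensity ρSA) :
    (daemonicGain (expUtility r) (1/2) ε v ρSA = 0 ↔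
      ∃ (uvals : Fin dS → ℝ) (φ : Fin dS → Fin dS → ℂ)
        (C : Fin dS → Matrix (Fin dA) (Fin dA) ℂ),
        ONFam φ ∧ Antitone uvals ∧
        (expHam ε v (-r/2) * ptraceA ρSA * expHam ε v (-r/2)
          = ∑ k, (uvals k : ℂ) • ketbra (φ k) (φ k)) ∧
        (∀ k, (C k).PosSemidef) ∧
        (∀ (k : Fin dS) (h : (k : ℕ) + 1 < dS), (C k - C ⟨(k : ℕ) + 1, h⟩).PosSemidef) ∧
        ρSA = ∑ k, (expHam ε v (r/2) * ketbra (φ k) (φ k) * expHam ε v (r/2)) ⊗ₖ C k) ∧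
    (daemonicGain (expUtility r) (1/2) ε v ρSA = 0 → IsSeparable ρSA) := by
  refine ⟨⟨fun h => forward r hr ε hε v hv ρSA hρSA h, ?_⟩, fun h => ?_⟩
  · rintro ⟨uvals, φ, C, hφ, hu, hS, hC, hCC, hd⟩
    exact backward r hr ε hε v hv ρSA hρSA uvals φ C hφ hu hS hC hCC hd
  · obtain ⟨uvals, φ, C, hφ, hu, hS, hC, hCC, hd⟩ := forward r hr ε hε v hv ρSA hρSA h
    exact separable r ε v hv ρSA hρSA φ C hφ hC hd

end Daemonic
end
end

section
/- Let d_S = 2, with ρ_S the density matrix with entries ρ_{11} = p, ρ_{22} = 1 − p, ρ_{12} = c, ρ_{21} = c* in the eigenbasis {|ε₁⟩, |ε₂⟩} of H_S, and let U be the unitary with columns (α, β) and (−β*, α*) where |α|² + |β|² = 1. Then for q = 1/2 and any utility u with u(0) = 0, the expected utility equals ⟨u(w)⟩_{ρ_S,U} = |β|² X − p |β|² Y − 2 Re(c α β) Z, where X = u(ε₂ − ε₁), Y = u(ε₂ − ε₁) − u(−(ε₂ − ε₁)) and Z = u((ε₂ − ε₁)/2) − u(−(ε₂ − ε₁)/2).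 -/
open Matrix BigOperators Finset Kronecker
open scoped ComplexOrder

noncomputable section

namespace Daemonic

theorem matElem_ketbra_aux (v : Fin 2 → Fin 2 → ℂ) (hv : ONFam v) (a b i j : Fin 2) :
    matElem (ketbra (v a) (v b)) (v i) (v j) =
      (if i = a then 1 else 0) * (if b = j then 1 else 0) := by
  rw [← hv i a, ← hv b j]
  simp only [matElem, ketbra, dotProduct, mulVec, vecMulVec_apply, Fin.sum_univ_two, Pi.star_apply]
  ring

theorem matElem_add_aux (M N : Matrix (Fin 2) (Fin 2) ℂ) (x y : Fin 2 → ℂ) :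
    matElem (M + N) x y = matElem M x y + matElem N x y := by
  simp only [matElem, add_mulVec, dotProduct_add]

theorem matElem_smul_aux (a : ℂ) (M : Matrix (Fin 2) (Fin 2) ℂ) (x y : Fin 2 → ℂ) :
    matElem (a • M) x y = a * matElem M x y := by
  simp only [matElem, smul_mulVec, dotProduct_smul, smul_eq_mul]

theorem matElem_conj_aux (M : Matrix (Fin 2) (Fin 2) ℂ) (x y : Fin 2 → ℂ) :
    matElem Mᴴ x y = starRingEnd ℂ (matElem M y x) := by
  simp only [matElem, dotProduct, mulVec, Fin.sum_univ_two, Pi.star_apply, conjTranspose_apply,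
    map_add, map_mul, ← starRingEnd_apply, Complex.conj_conj]
  ring

/-- for a qubit, `q = 1/2` and a utility with `u(0) = 0`, the expected utility
is `⟨u(w)⟩ = |β|² X - p |β|² Y - 2 Re(cαβ) Z`. -/
theorem stmt10 (u : ℝ → ℝ) (hu0 : u 0 = 0)
    (ε : Fin 2 → ℝ) (hε : ε 0 < ε 1)
    (v : Fin 2 → Fin 2 → ℂ) (hv : ONFam v)
    (p : ℝ) (c α β : ℂ) (hαβ : Complex.normSq α + Complex.normSq β = 1)
    (ρ : Matrix (Fin 2) (Fin 2) ℂ) (hρ : IsDensity ρ)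
    (hρdef : ρ = (p : ℂ) • ketbra (v 0) (v 0) + c • ketbra (v 0) (v 1) +
      (starRingEnd ℂ c) • ketbra (v 1) (v 0) + ((1 - p : ℝ) : ℂ) • ketbra (v 1) (v 1))
    (U : Matrix (Fin 2) (Fin 2) ℂ)
    (hUdef : U = α • ketbra (v 0) (v 0) + β • ketbra (v 1) (v 0) +
      (-(starRingEnd ℂ β)) • ketbra (v 0) (v 1) + (starRingEnd ℂ α) • ketbra (v 1) (v 1)) :
    expUtil u (1/2) ε v ρ U =
      Complex.normSq β * u (ε 1 - ε 0) -
      p * Complex.normSq β * (u (ε 1 - ε 0) - u (-(ε 1 - ε 0))) -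
      2 * (c * α * β).re * (u ((ε 1 - ε 0)/2) - u (-((ε 1 - ε 0)/2))) := by
  have e1 : (1/2 : ℝ) * ε 0 + (1 - 1/2) * ε 0 - ε 0 = 0 := by ring
  have e2 : (1/2 : ℝ) * ε 0 + (1 - 1/2) * ε 0 - ε 1 = -(ε 1 - ε 0) := by ring
  have e3 : (1/2 : ℝ) * ε 0 + (1 - 1/2) * ε 1 - ε 0 = (ε 1 - ε 0)/2 := by ring
  have e4 : (1/2 : ℝ) * ε 0 + (1 - 1/2) * ε 1 - ε 1 = -((ε 1 - ε 0)/2) := by ring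
  have e5 : (1/2 : ℝ) * ε 1 + (1 - 1/2) * ε 0 - ε 0 = (ε 1 - ε 0)/2 := by ring
  have e6 : (1/2 : ℝ) * ε 1 + (1 - 1/2) * ε 0 - ε 1 = -((ε 1 - ε 0)/2) := by ring
  have e7 : (1/2 : ℝ) * ε 1 + (1 - 1/2) * ε 1 - ε 0 = ε 1 - ε 0 := by ring
  have e8 : (1/2 : ℝ) * ε 1 + (1 - 1/2) * ε 1 - ε 1 = 0 := by ring
  simp only [expUtil, Fin.sum_univ_two, e1, e2, e3, e4, e5, e6, e7, e8, hu0, matElem_conj_aux]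
  subst hρdef hUdef
  simp only [matElem_add_aux, matElem_smul_aux, matElem_ketbra_aux v hv]
  generalize u (ε 1 - ε 0) = A
  generalize u (-(ε 1 - ε 0)) = B
  generalize u ((ε 1 - ε 0)/2) = C
  generalize u (-((ε 1 - ε 0)/2)) = D
  simp [Complex.normSq_apply]
  ring
end Daemonic
end
end
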